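/- Let α > 0, β > 0, c_fast ≥ 0, c_slow ≥ 0, ε > 0 be real numbers, and let y_slow, y_fast be real numbers satisfying y_slow ≤ y_fast ≤ (1 + ε)·y_slow. If the model selection threshold condition fails, i.e. ε²·y_fast²/(1 + ε)² ≤ (β/α)·c_slow, then choosing the fast model is at least as good as choosing the slow model when the slow model's output is the ground truth: −α·(y_fast − y_slow)² − β·c_fast ≥ −β·(c_fast + c_slow). -/

import Mathlib

section ModelSelection

variable {K : Type*} [Field K] [LinearOrder K] [IsStrictOrderedRing K]

lemma sub_le_mul_div_one_add_iff {ε x y : K} (hε : 0 < 1 + ε) :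
    y - x ≤ ε * y / (1 + ε) ↔ y ≤ (1 + ε) * x := by
  rw [le_div_iff₀ hε]
  constructor <;> intro h <;> linarith

/-- The bound does not mention `x` because the policy sees the fast prediction `y` but not the slow
prediction `x`. -/
lemma sub_sq_le_of_le_one_add_mul {ε x y : K} (hε : 0 < 1 + ε) (hxy : x ≤ y)
    (hyx : y ≤ (1 + ε) * x) : (y - x) ^ 2 ≤ ε ^ 2 * y ^ 2 / (1 + ε) ^ 2 :=
  calc
    (y - x) ^ 2 ≤ (ε * y / (1 + ε)) ^ 2 :=
      pow_le_pow_left₀ (sub_nonneg.mpr hxy) ((sub_le_mul_div_one_add_iff hε).mpr hyx) 2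
    _ = ε ^ 2 * y ^ 2 / (1 + ε) ^ 2 := by rw [div_pow, mul_pow]

lemma slow_reward_le_fast_reward_iff {α : K} (hα : 0 < α) (β c_fast c_slow loss : K) :
    -β * (c_fast + c_slow) ≤ -α * loss - β * c_fast ↔ loss ≤ β / α * c_slow := by
  rw [div_mul_eq_mul_div, le_div_iff₀' hα]
  constructor <;> intro h <;> linarith

theorem stmt_5_general {α β c_fast c_slow ε y_slow y_fast : K} (hα : 0 < α) (hε : 0 < 1 + ε)
    (h₁ : y_slow ≤ y_fast) (h₂ : y_fast ≤ (1 + ε) * y_slow)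
    (hthr : ε ^ 2 * y_fast ^ 2 / (1 + ε) ^ 2 ≤ (β / α) * c_slow) :
    -α * (y_fast - y_slow) ^ 2 - β * c_fast ≥ -β * (c_fast + c_slow) :=
  (slow_reward_le_fast_reward_iff hα β c_fast c_slow _).mpr <|
    (sub_sq_le_of_le_one_add_mul hε h₁ h₂).trans hthr

end ModelSelection

/-- For coreset-compressed linear regression, if the selection
threshold condition fails, i.e. `ε²·y_fast²/(1+ε)² ≤ (β/α)·c_slow`, then keeping
the fast model is at least as good as invoking the slow model (whose output is
the ground truth). -/
theorem stmt_5 (α β c_fast c_slow ε y_slow y_fast : ℝ)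
    (hα : 0 < α) (hβ : 0 < β) (hcf : 0 ≤ c_fast) (hcs : 0 ≤ c_slow) (hε : 0 < ε)
    (h₁ : y_slow ≤ y_fast) (h₂ : y_fast ≤ (1 + ε) * y_slow)
    (hthr : ε ^ 2 * y_fast ^ 2 / (1 + ε) ^ 2 ≤ (β / α) * c_slow) :
    -α * (y_fast - y_slow) ^ 2 - β * c_fast ≥ -β * (c_fast + c_slow) :=
  stmt_5_general hα (by positivity) h₁ h₂ hthr
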